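/- (Inductive characterization of the highest-equilibrium price) Let M be a unit-demand market, j a good, and let W_low^{-j} denote the lowest competitive equilibrium of the market M^{-j} obtained by removing good j. Then the price of good j at the highest competitive equilibrium of M equals the induced price p^j(u(W_low^{-j})) = max({p_i^j(u_i(W_low^{-j})) : i ∈ I} ∪ {0}), where p_i^j is the inverse of u_i^j. -/

import Mathlib

attribute [local instance] Classical.propDecidable

/-- A unit-demand market: finite sets of buyers `I` and goods `J`, with utility
functions `u i j : ℝ → ℝ` that are continuous, strictly decreasing, surjective
(domain and range cover all of `ℝ`), and eventually non-positive. -/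
structure Market (I J : Type) [Fintype I] [Fintype J] where
  u : I → J → ℝ → ℝ
  cont : ∀ i j, Continuous (u i j)
  anti : ∀ i j, StrictAnti (u i j)
  surj : ∀ i j, Function.Surjective (u i j)
  evNonpos : ∀ i j, ∃ x : ℝ, ∀ y ≥ x, u i j y ≤ 0

/-- A competitive equilibrium: nonnegative prices `p`, nonnegative payoffs `w`,
and a partial matching `μ` (injective on matched buyers) such that every buyer
receives a most preferred good at the prices, unmatched buyers have payoff `0`,
and unmatched goods have price `0`. -/
def IsEquilib {I J : Type} [Fintype I] [Fintype J] (M : Market I J)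
    (p : J → ℝ) (w : I → ℝ) (μ : I → Option J) : Prop :=
  (∀ i i' j, μ i = some j → μ i' = some j → i = i') ∧
  (∀ j, 0 ≤ p j) ∧ (∀ i, 0 ≤ w i) ∧
  (∀ i j, μ i = some j → w i = M.u i j (p j)) ∧
  (∀ i j, M.u i j (p j) ≤ w i) ∧
  (∀ i, μ i = none → w i = 0) ∧
  (∀ j, (∀ i, μ i ≠ some j) → p j = 0)

/-- `W` is the lowest competitive equilibrium: its prices are componentwise
below those of every competitive equilibrium. -/
def IsLowest {I J : Type} [Fintype I] [Fintype J] (M : Market I J)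
    (p : J → ℝ) (w : I → ℝ) (μ : I → Option J) : Prop :=
  IsEquilib M p w μ ∧ ∀ p' w' μ', IsEquilib M p' w' μ' → ∀ j, p j ≤ p' j

/-- `W` is the highest competitive equilibrium: its prices are componentwise
above those of every competitive equilibrium. -/
def IsHighest {I J : Type} [Fintype I] [Fintype J] (M : Market I J)
    (p : J → ℝ) (w : I → ℝ) (μ : I → Option J) : Prop :=
  IsEquilib M p w μ ∧ ∀ p' w' μ', IsEquilib M p' w' μ' → ∀ j, p' j ≤ p j

/-- Induced payoff `u_i(p) = max({u_i^j(p^j) : j} ∪ {0})`. -/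
noncomputable def inducedPayoff {I J : Type} [Fintype I] [Fintype J] (M : Market I J)
    (p : J → ℝ) (i : I) : ℝ :=
  (insert (0:ℝ) (Finset.univ.image fun j => M.u i j (p j))).max' (Finset.insert_nonempty _ _)

/-- Induced price `p^j(u) = max({p_i^j(u_i) : i} ∪ {0})`, where `p_i^j` is the
inverse of `u_i^j`. -/
noncomputable def inducedPrice {I J : Type} [Fintype I] [Fintype J] (M : Market I J)
    (w : I → ℝ) (j : J) : ℝ :=
  (insert (0:ℝ) (Finset.univ.image fun i => Function.invFun (M.u i j) (w i))).max' (Finset.insert_nonempty _ _)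

/-- The market with buyer `i0` removed. -/
def Market.removeBuyer {I J : Type} [Fintype I] [Fintype J] [DecidableEq I]
    (M : Market I J) (i0 : I) : Market {i : I // i ≠ i0} J where
  u := fun i j => M.u i.1 j
  cont := fun i j => M.cont i.1 j
  anti := fun i j => M.anti i.1 j
  surj := fun i j => M.surj i.1 j
  evNonpos := fun i j => M.evNonpos i.1 j

/-- The market with good `j0` removed. -/
def Market.removeGood {I J : Type} [Fintype I] [Fintype J] [DecidableEq J]
    (M : Market I J) (j0 : J) : Market I {j : J // j ≠ j0} where
  u := fun i j => M.u i j.1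
  cont := fun i j => M.cont i j.1
  anti := fun i j => M.anti i j.1
  surj := fun i j => M.surj i j.1
  evNonpos := fun i j => M.evNonpos i j.1

/-!
Equilibria with reserve prices link `M` to the market without `j0`: leaving `j0` unsold at a
price `x` is an equilibrium of `M` with reserve price `x` on `j0` exactly when the rest is an
equilibrium without `j0` and `x` is at least the induced price.

Pricing `j0` at the price induced by any equilibrium without it thus gives an equilibrium of `M`
with a reserve price. Compare it with an equilibrium without reserve prices: the goods that are
dearer in the latter are all sold there, to buyers who are worse off than in the former, and each of
these buyers holds in the former a good that is dearer in the latter. By counting, every such good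
is sold in both. As `j0` is unsold in the former, it is not dearer in the latter.

Conversely, put on `j0` a reserve price `x` below the price induced by the lowest equilibrium. Were
`j0` unsold, the rest would be an equilibrium with prices above the lowest ones, so with lower
payoffs, and hence with an induced price above `x`, a contradiction. So `j0` is sold, the outcome
is an equilibrium of `M`, and the highest price is at least `x`.

Existence with reserve prices comes from an ascending auction with increments `ε`, by compactness
as `ε` tends to `0`.
-/

section Reserve

variable {I J : Type} [Fintype I] [Fintype J] {M : Market I J}
  {r r' p p' : J → ℝ} {w w' : I → ℝ} {μ μ' : I → Option J}

/-- A competitive equilibrium with reserve prices `r`: as in `IsEquilib`, with `r` in place of `0`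
as the lower bound on prices and as the price of unsold goods. -/
structure IsReserveEquilib (M : Market I J) (r p : J → ℝ) (w : I → ℝ) (μ : I → Option J) :
    Prop where
  inj : ∀ i i' j, μ i = some j → μ i' = some j → i = i'
  reserve_le : ∀ j, r j ≤ p j
  payoff_nonneg : ∀ i, 0 ≤ w i
  payoff_eq : ∀ i j, μ i = some j → w i = M.u i j (p j)
  u_le_payoff : ∀ i j, M.u i j (p j) ≤ w i
  payoff_unmatched : ∀ i, μ i = none → w i = 0
  price_unsold : ∀ j, (∀ i, μ i ≠ some j) → p j = r j

lemma isReserveEquilib_zero : IsReserveEquilib M 0 p w μ ↔ IsEquilib M p w μ :=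
  ⟨fun ⟨h₁, h₂, h₃, h₄, h₅, h₆, h₇⟩ => ⟨h₁, h₂, h₃, h₄, h₅, h₆, h₇⟩,
    fun ⟨h₁, h₂, h₃, h₄, h₅, h₆, h₇⟩ => ⟨h₁, h₂, h₃, h₄, h₅, h₆, h₇⟩⟩

namespace IsReserveEquilib

lemma lower_reserve (h : IsReserveEquilib M r p w μ) (hr : r' ≤ r)
    (hunsold : ∀ j, (∀ i, μ i ≠ some j) → r j = r' j) : IsReserveEquilib M r' p w μ where
  __ := h
  reserve_le j := (hr j).trans (h.reserve_le j)
  price_unsold j hj := (h.price_unsold j hj).trans (hunsold j hj)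

lemma exists_payoff_lt_of_price_lt (h : IsReserveEquilib M r p w μ)
    (h' : IsReserveEquilib M r' p' w' μ') (hr : r ≤ r') {j : J} (hj : p' j < p j) :
    ∃ i, μ i = some j ∧ w i < w' i := by
  have hsold : ∃ i, μ i = some j := by
    by_contra! hunsold
    exact ((hr j).trans (h'.reserve_le j)).not_gt (hj.trans_eq (h.price_unsold j hunsold))
  obtain ⟨i, hi⟩ := hsold
  refine ⟨i, hi, ?_⟩
  calc w i = M.u i j (p j) := h.payoff_eq i j hi
    _ < M.u i j (p' j) := M.anti i j hj
    _ ≤ w' i := h'.u_le_payoff i j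

lemma exists_price_lt_of_payoff_lt (h : IsReserveEquilib M r p w μ)
    (h' : IsReserveEquilib M r' p' w' μ') {i : I} (hi : w i < w' i) :
    ∃ j, μ' i = some j ∧ p' j < p j := by
  cases hμ : μ' i with
  | none => exact absurd (hi.trans_eq (h'.payoff_unmatched i hμ)) (h.payoff_nonneg i).not_gt
  | some j =>
    refine ⟨j, rfl, (M.anti i j).lt_iff_gt.1 ?_⟩
    calc M.u i j (p j) ≤ w i := h.u_le_payoff i j
      _ < w' i := hi
      _ = M.u i j (p' j) := h'.payoff_eq i j hμ

lemma payoff_le_of_price_le (h : IsReserveEquilib M r p w μ)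
    (h' : IsReserveEquilib M r' p' w' μ') (hp : p ≤ p') : w' ≤ w := by
  intro i
  by_contra! hi
  obtain ⟨j, -, hj⟩ := h.exists_price_lt_of_payoff_lt h' hi
  exact (hp j).not_gt hj

lemma exists_match_of_price_lt (h : IsReserveEquilib M r p w μ)
    (h' : IsReserveEquilib M r' p' w' μ') (hr : r ≤ r') {j : J} (hj : p' j < p j) :
    ∃ i, μ' i = some j := by
  have hswap (a : {j // p' j < p j}) :
      ∃ b : {j // p' j < p j}, ∃ i, μ i = some a.1 ∧ μ' i = some b.1 := by
    obtain ⟨i, hia, hi⟩ := h.exists_payoff_lt_of_price_lt h' hr a.2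
    obtain ⟨b, hib, hb⟩ := h.exists_price_lt_of_payoff_lt h' hi
    exact ⟨⟨b, hb⟩, i, hia, hib⟩
  choose next buyer hbuyer hnext using hswap
  have next_injective : Function.Injective next := fun a b hab => by
    have hsame : buyer a = buyer b := h'.inj _ _ _ (hnext a) (hab ▸ hnext b)
    exact Subtype.ext (Option.some.inj ((hbuyer a).symm.trans (hsame ▸ hbuyer b)))
  obtain ⟨a, ha⟩ := Finite.surjective_of_injective next_injective ⟨j, hj⟩
  exact ⟨buyer a, by rw [hnext a, ha]⟩

end IsReserveEquilib

lemma IsLowest.payoff_le (hlow : IsLowest M p w μ) (h : IsEquilib M p' w' μ') : w' ≤ w :=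
  (isReserveEquilib_zero.2 hlow.1).payoff_le_of_price_le (isReserveEquilib_zero.2 h)
    (hlow.2 p' w' μ' h)

end Reserve

section Award

variable {I J : Type*} {μ : I → Option J} {i : I} {j : J}

/-- The matching obtained from `μ` by giving good `j` to buyer `i`; the holder of `j` under `μ`, if
any other, is left unmatched. -/
noncomputable def award (μ : I → Option J) (i : I) (j : J) : I → Option J := fun a =>
  if a = i then some j else if μ a = some j then none else μ a

lemma award_eq_some_iff {a : I} {l : J} :
    award μ i j a = some l ↔ a = i ∧ l = j ∨ a ≠ i ∧ l ≠ j ∧ μ a = some l := by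
  unfold award
  grind

lemma award_inj (hμ : ∀ a b l, μ a = some l → μ b = some l → a = b) (a b : I) (l : J)
    (ha : award μ i j a = some l) (hb : award μ i j b = some l) : a = b := by
  rcases award_eq_some_iff.1 ha with ⟨rfl, hl⟩ | ⟨-, hl, ha'⟩ <;>
    rcases award_eq_some_iff.1 hb with ⟨rfl, hl'⟩ | ⟨-, hl', hb'⟩
  · rfl
  · exact absurd hl hl'
  · exact absurd hl' hl
  · exact hμ a b l ha' hb'

end Award

section Auction

variable {I J : Type} [Fintype I] [Fintype J]

/-- A state of the ascending auction with increment `ε` and reserve prices `r`: sold goods give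
their buyers a nonnegative payoff that no good beats once its price is raised by `ε`, and unsold
goods are at their reserve price. -/
structure AuctionState (M : Market I J) (r : J → ℝ) (ε : ℝ) (p : J → ℝ)
    (μ : I → Option J) : Prop where
  inj : ∀ i i' j, μ i = some j → μ i' = some j → i = i'
  reserve_le : ∀ j, r j ≤ p j
  nonneg : ∀ i j, μ i = some j → 0 ≤ M.u i j (p j)
  almost_best : ∀ i j, μ i = some j → ∀ l, M.u i l (p l + ε) ≤ M.u i j (p j)
  price_unsold : ∀ j, (∀ i, μ i ≠ some j) → p j = r j

/-- A terminal state of the ascending auction: no unmatched buyer gains from bidding `ε` above the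
current price of a good. -/
structure TerminalState (M : Market I J) (r : J → ℝ) (ε : ℝ) (p : J → ℝ)
    (μ : I → Option J) : Prop extends AuctionState M r ε p μ where
  no_bid : ∀ i, μ i = none → ∀ j, M.u i j (p j + ε) ≤ 0

variable {M : Market I J} {r p : J → ℝ} {ε B : ℝ} {μ : I → Option J}

lemma auctionState_reserve (M : Market I J) (r : J → ℝ) (ε : ℝ) :
    AuctionState M r ε r fun _ => none := by
  constructor <;> simp

namespace AuctionState

lemma price_le (h : AuctionState M r ε p μ) (hr : ∀ j, r j ≤ B) (hB : ∀ i j, M.u i j B ≤ 0)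
    (j : J) : p j ≤ B := by
  by_cases hj : ∀ i, μ i ≠ some j
  · exact (h.price_unsold j hj).trans_le (hr j)
  · push Not at hj
    obtain ⟨i, hi⟩ := hj
    exact (M.anti i j).le_iff_ge.1 ((hB i j).trans (h.nonneg i j hi))

lemma raise (h : AuctionState M r ε p μ) (hε : 0 ≤ ε) {i : I} (hi : μ i = none) {j : J}
    (hnonneg : 0 ≤ M.u i j (p j + ε)) (hbest : ∀ l, M.u i l (p l + ε) ≤ M.u i j (p j + ε)) :
    AuctionState M r ε (p + Pi.single j ε) (award μ i j) := by
  set q : J → ℝ := p + Pi.single j ε with hq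
  have hle : p ≤ q := le_add_of_nonneg_right (Pi.single_nonneg.2 hε)
  have hu (a l) : M.u a l (q l + ε) ≤ M.u a l (p l + ε) :=
    (M.anti a l).antitone (add_le_add_left (hle l) ε)
  have hqj : q j = p j + ε := by simp [hq]
  have hq_ne {l} (hl : l ≠ j) : q l = p l := by simp [hq, hl]
  refine ⟨award_inj h.inj, fun l => (h.reserve_le l).trans (hle l), ?_, ?_, ?_⟩
  · intro a l ha
    rcases award_eq_some_iff.1 ha with ⟨rfl, rfl⟩ | ⟨-, hl, ha'⟩
    · rwa [hqj]
    · rw [hq_ne hl]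
      exact h.nonneg a l ha'
  · intro a l ha k
    rcases award_eq_some_iff.1 ha with ⟨rfl, rfl⟩ | ⟨-, hl, ha'⟩
    · rw [hqj]
      exact (hu a k).trans (hbest k)
    · rw [hq_ne hl]
      exact (hu a k).trans (h.almost_best a l ha' k)
  · intro l hunsold
    have hlj : l ≠ j := fun hlj => hunsold i (award_eq_some_iff.2 (.inl ⟨rfl, hlj⟩))
    rw [hq_ne hlj]
    refine h.price_unsold l fun a ha => hunsold a (award_eq_some_iff.2 (.inr ⟨?_, hlj, ha⟩))
    rintro rfl
    simp [hi] at ha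

lemma exists_raise (h : AuctionState M r ε p μ) (hε : 0 ≤ ε) (hT : ¬ TerminalState M r ε p μ) :
    ∃ p' μ', AuctionState M r ε p' μ' ∧ ∑ j, p' j = ∑ j, p j + ε := by
  have hbid : ∃ i, μ i = none ∧ ∃ l, 0 < M.u i l (p l + ε) := by
    by_contra! hno
    exact hT ⟨h, hno⟩
  obtain ⟨i, hi, l, hl⟩ := hbid
  have : Nonempty J := ⟨l⟩
  obtain ⟨j, hj⟩ := Finite.exists_max fun j => M.u i j (p j + ε)
  exact ⟨_, _, h.raise hε hi (hl.le.trans (hj l)) hj, by simp [Finset.sum_add_distrib]⟩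

end AuctionState

lemma exists_terminalState (hr : ∀ j, r j ≤ B) (hB : ∀ i j, M.u i j B ≤ 0) (hε : 0 < ε) :
    ∃ p μ, TerminalState M r ε p μ := by
  by_contra! hnever
  have hstates (n : ℕ) : ∃ p μ, AuctionState M r ε p μ ∧ ∑ j, p j = ∑ j, r j + n * ε := by
    induction n with
    | zero => exact ⟨r, _, auctionState_reserve M r ε, by simp⟩
    | succ n ih =>
      obtain ⟨p, μ, h, hsum⟩ := ih
      obtain ⟨p', μ', h', hsum'⟩ := h.exists_raise hε.le (hnever p μ)
      exact ⟨p', μ', h', by rw [hsum', hsum]; push_cast; ring⟩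
  obtain ⟨n, hn⟩ := exists_lt_nsmul hε (∑ _j : J, B - ∑ j, r j)
  obtain ⟨p, μ, h, hsum⟩ := hstates n
  have hbound : ∑ j, p j ≤ ∑ _j : J, B := Finset.sum_le_sum fun j _ => h.price_le hr hB j
  rw [nsmul_eq_mul] at hn
  linarith

lemma isClosed_setOf_terminalState (M : Market I J) (r : J → ℝ) (μ : I → Option J) :
    IsClosed {a : ℝ × (J → ℝ) | TerminalState M r a.1 a.2 μ} := by
  refine isClosed_of_closure_subset fun a ha => ?_
  obtain ⟨b, hb⟩ := closure_nonempty_iff.1 ⟨a, ha⟩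
  have limit_le {f g : ℝ × (J → ℝ) → ℝ} (hf : Continuous f) (hg : Continuous g)
      (hfg : ∀ b : ℝ × (J → ℝ), TerminalState M r b.1 b.2 μ → f b ≤ g b) : f a ≤ g a :=
    le_on_closure hfg hf.continuousOn hg.continuousOn ha
  have hprice (j : J) : Continuous fun b : ℝ × (J → ℝ) => b.2 j := by fun_prop
  have hu (i j) : Continuous fun b : ℝ × (J → ℝ) => M.u i j (b.2 j) :=
    (M.cont i j).comp (hprice j)
  have hbid (i j) : Continuous fun b : ℝ × (J → ℝ) => M.u i j (b.2 j + b.1) :=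
    (M.cont i j).comp ((hprice j).add continuous_fst)
  exact {
    inj := hb.inj
    reserve_le j := limit_le continuous_const (hprice j) fun b hb => hb.reserve_le j
    nonneg i j hi := limit_le continuous_const (hu i j) fun b hb => hb.nonneg i j hi
    almost_best i j hi l := limit_le (hbid i l) (hu i j) fun b hb => hb.almost_best i j hi l
    price_unsold j hj := le_antisymm
      (limit_le (hprice j) continuous_const fun b hb => (hb.price_unsold j hj).le)
      (limit_le continuous_const (hprice j) fun b hb => hb.reserve_le j)
    no_bid i hi j := limit_le (hbid i j) continuous_const fun b hb => hb.no_bid i hi j }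

lemma isClosed_setOf_exists_terminalState (M : Market I J) (r : J → ℝ) (B : ℝ) :
    IsClosed {ε : ℝ | ∃ p ∈ Set.Icc r fun _ => B, ∃ μ, TerminalState M r ε p μ} := by
  have : CompactSpace (Set.Icc r fun _ => B) := isCompact_iff_compactSpace.1 isCompact_Icc
  have hval : Continuous fun a : ℝ × Set.Icc r fun _ => B => (a.1, a.2.1) := by fun_prop
  have hclosed : IsClosed {a : ℝ × Set.Icc r fun _ => B | ∃ μ, TerminalState M r a.1 a.2 μ} := by
    rw [Set.ofPred_exists]
    exact isClosed_iUnion_of_finite fun μ =>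
      (isClosed_setOf_terminalState M r μ).preimage hval
  convert isClosedMap_fst_of_compactSpace _ hclosed using 1
  ext ε
  simp

lemma Market.exists_price_bound (M : Market I J) (r : J → ℝ) :
    ∃ B, (∀ j, r j ≤ B) ∧ ∀ i j, M.u i j B ≤ 0 := by
  have hu : ∀ᶠ B in Filter.atTop, ∀ i j, M.u i j B ≤ 0 :=
    Filter.eventually_all.2 fun i => Filter.eventually_all.2 fun j =>
      Filter.eventually_atTop.2 (M.evNonpos i j)
  exact ((Filter.eventually_all.2 fun j => Filter.eventually_ge_atTop (r j)).and hu).exists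

lemma exists_terminalState_zero (M : Market I J) (r : J → ℝ) :
    ∃ p μ, TerminalState M r 0 p μ := by
  obtain ⟨B, hr, hB⟩ := M.exists_price_bound r
  have hpos : Set.Ioi 0 ⊆ {ε : ℝ | ∃ p ∈ Set.Icc r fun _ => B, ∃ μ, TerminalState M r ε p μ} := by
    intro ε hε
    obtain ⟨p, μ, h⟩ := exists_terminalState hr hB hε
    exact ⟨p, ⟨h.reserve_le, h.price_le hr hB⟩, μ, h⟩
  have hzero : (0 : ℝ) ∈ closure (Set.Ioi 0) := by simp only [closure_Ioi, Set.self_mem_Ici]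
  obtain ⟨p, -, μ, h⟩ := closure_minimal hpos (isClosed_setOf_exists_terminalState M r B) hzero
  exact ⟨p, μ, h⟩

lemma TerminalState.isReserveEquilib (h : TerminalState M r 0 p μ) :
    IsReserveEquilib M r p (fun i => (μ i).elim 0 fun j => M.u i j (p j)) μ where
  inj := h.inj
  reserve_le := h.reserve_le
  payoff_nonneg i := by
    cases hi : μ i with
    | none => exact le_rfl
    | some j => exact h.nonneg i j hi
  payoff_eq i j hi := by simp only [hi, Option.elim_some]
  u_le_payoff i l := by
    cases hi : μ i with
    | none => simpa only [add_zero, Option.elim_none] using h.no_bid i hi l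
    | some j => simpa only [add_zero, Option.elim_some] using h.almost_best i j hi l
  payoff_unmatched i hi := by simp only [hi, Option.elim_none]
  price_unsold := h.price_unsold

lemma Market.exists_isReserveEquilib (M : Market I J) (r : J → ℝ) :
    ∃ p w μ, IsReserveEquilib M r p w μ := by
  obtain ⟨p, μ, h⟩ := exists_terminalState_zero M r
  exact ⟨p, _, μ, h.isReserveEquilib⟩

end Auction

section InducedPrice

variable {I J : Type} [Fintype I] [Fintype J] (M : Market I J) {w w' : I → ℝ} {j : J}

lemma Market.inducedPrice_le_iff {x : ℝ} :
    inducedPrice M w j ≤ x ↔ 0 ≤ x ∧ ∀ i, M.u i j x ≤ w i := by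
  have hinv (i) : Function.invFun (M.u i j) (w i) ≤ x ↔ M.u i j x ≤ w i := by
    rw [← (M.anti i j).le_iff_ge, Function.invFun_eq (M.surj i j (w i))]
  simp [inducedPrice, Finset.max'_le_iff, hinv]

lemma Market.inducedPrice_nonneg (w : I → ℝ) (j : J) : 0 ≤ inducedPrice M w j :=
  (M.inducedPrice_le_iff.1 le_rfl).1

lemma Market.inducedPrice_anti (hw : w ≤ w') : inducedPrice M w' j ≤ inducedPrice M w j := by
  obtain ⟨hnonneg, hu⟩ := M.inducedPrice_le_iff.1 (le_refl (inducedPrice M w j))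
  exact M.inducedPrice_le_iff.2 ⟨hnonneg, fun i => (hu i).trans (hw i)⟩

end InducedPrice

lemma exists_eq_map_val_of_forall_ne {I J : Type*} {j0 : J} {μ : I → Option J}
    (h : ∀ i, μ i ≠ some j0) :
    ∃ ν : I → Option {j // j ≠ j0}, μ = fun i => (ν i).map Subtype.val := by
  have hlift (i) : ∃ o : Option {j // j ≠ j0}, μ i = o.map Subtype.val := by
    cases hi : μ i with
    | none => exact ⟨none, rfl⟩
    | some j => exact ⟨some ⟨j, fun hj => h i (hj ▸ hi)⟩, rfl⟩
  choose ν hν using hlift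
  exact ⟨ν, funext hν⟩

lemma map_val_ne_some {J : Type*} {j0 : J} (o : Option {j // j ≠ j0}) :
    o.map Subtype.val ≠ some j0 := by
  rw [Ne, Option.map_eq_some_iff]
  rintro ⟨j, -, hj⟩
  exact j.2 hj

lemma single_comp_val_eq_zero {J R : Type*} [DecidableEq J] [Zero R] (j0 : J) (x : R) :
    (fun j : {j // j ≠ j0} => (Pi.single j0 x : J → R) j) = 0 := by
  ext j
  simp [j.2]

section RemoveGood

variable {I J : Type} [Fintype I] [Fintype J] [DecidableEq J] {M : Market I J} {j0 : J}
  {p : J → ℝ} {w : I → ℝ} {μ : I → Option J}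
  {pg : {j : J // j ≠ j0} → ℝ} {wg : I → ℝ} {μg : I → Option {j : J // j ≠ j0}}

lemma isReserveEquilib_map_val_iff {r : J → ℝ} :
    IsReserveEquilib M r p w (fun i => (μg i).map Subtype.val) ↔
      IsReserveEquilib (M.removeGood j0) (fun j => r j) (fun j => p j) w μg ∧
        p j0 = r j0 ∧ ∀ i, M.u i j0 (p j0) ≤ w i := by
  have hmatch (i) (j : {j // j ≠ j0}) :
      (μg i).map Subtype.val = some j.1 ↔ μg i = some j :=
    (Option.map_injective Subtype.val_injective).eq_iff (b := some j)
  constructor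
  · intro h
    refine ⟨⟨?_, fun j => h.reserve_le j, h.payoff_nonneg, ?_, fun i j => h.u_le_payoff i j,
      ?_, ?_⟩, h.price_unsold j0 fun i => map_val_ne_some (μg i), fun i => h.u_le_payoff i j0⟩
    · exact fun i i' j hi hi' => h.inj i i' j ((hmatch i j).2 hi) ((hmatch i' j).2 hi')
    · exact fun i j hi => h.payoff_eq i j ((hmatch i j).2 hi)
    · exact fun i hi => h.payoff_unmatched i (Option.map_eq_none_iff.2 hi)
    · exact fun j hj => h.price_unsold j fun i => (hmatch i j).not.2 (hj i)
  · rintro ⟨h, hprice, hu⟩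
    have hne {i j} (hi : (μg i).map Subtype.val = some j) : j ≠ j0 := by
      rintro rfl
      exact map_val_ne_some (μg i) hi
    refine ⟨?_, fun j => ?_, h.payoff_nonneg, ?_, fun i j => ?_, ?_, fun j hj => ?_⟩
    · exact fun i i' j hi hi' =>
        h.inj i i' ⟨j, hne hi⟩ ((hmatch i ⟨j, hne hi⟩).1 hi) ((hmatch i' ⟨j, hne hi⟩).1 hi')
    · by_cases hj : j = j0
      · exact hj ▸ hprice.ge
      · exact h.reserve_le ⟨j, hj⟩
    · exact fun i j hi => h.payoff_eq i ⟨j, hne hi⟩ ((hmatch i ⟨j, hne hi⟩).1 hi)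
    · by_cases hj : j = j0
      · exact hj ▸ hu i
      · exact h.u_le_payoff i ⟨j, hj⟩
    · exact fun i hi => h.payoff_unmatched i (Option.map_eq_none_iff.1 hi)
    · by_cases hj0 : j = j0
      · exact hj0 ▸ hprice
      · exact h.price_unsold ⟨j, hj0⟩ fun i => (hmatch i ⟨j, hj0⟩).not.1 (hj i)

lemma IsEquilib.isReserveEquilib_extend (hg : IsEquilib (M.removeGood j0) pg wg μg) {x : ℝ}
    (hx : inducedPrice M wg j0 ≤ x) :
    IsReserveEquilib M (Pi.single j0 x) (fun j => if h : j = j0 then x else pg ⟨j, h⟩) wg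
      (fun i => (μg i).map Subtype.val) := by
  have hrestrict : (fun j : {j // j ≠ j0} => if h : j.1 = j0 then x else pg ⟨j, h⟩) = pg :=
    funext fun j => dif_neg j.2
  rw [isReserveEquilib_map_val_iff, hrestrict, single_comp_val_eq_zero, isReserveEquilib_zero]
  simpa using ⟨hg, (M.inducedPrice_le_iff.1 hx).2⟩

lemma IsReserveEquilib.exists_isEquilib_removeGood {x : ℝ}
    (h : IsReserveEquilib M (Pi.single j0 x) p w μ) (hunsold : ∀ i, μ i ≠ some j0) :
    ∃ ν, IsEquilib (M.removeGood j0) (fun j => p j) w ν := by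
  obtain ⟨ν, rfl⟩ := exists_eq_map_val_of_forall_ne hunsold
  rw [isReserveEquilib_map_val_iff, single_comp_val_eq_zero, isReserveEquilib_zero] at h
  exact ⟨ν, h.1⟩

lemma IsReserveEquilib.isEquilib_of_sold {x : ℝ} (hx : 0 ≤ x)
    (h : IsReserveEquilib M (Pi.single j0 x) p w μ) (hsold : ∃ i, μ i = some j0) :
    IsEquilib M p w μ := by
  refine isReserveEquilib_zero.1 (h.lower_reserve (Pi.single_nonneg.2 hx) fun j hj => ?_)
  obtain ⟨i, hi⟩ := hsold
  have hne : j ≠ j0 := fun hjj0 => hj i (hjj0 ▸ hi)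
  exact Pi.single_eq_of_ne hne (M := fun _ => ℝ) x

lemma IsEquilib.price_le_inducedPrice (h : IsEquilib M p w μ)
    (hg : IsEquilib (M.removeGood j0) pg wg μg) : p j0 ≤ inducedPrice M wg j0 := by
  by_contra! hlt
  obtain ⟨i, hi⟩ := (isReserveEquilib_zero.2 h).exists_match_of_price_lt
    (hg.isReserveEquilib_extend le_rfl) (Pi.single_nonneg.2 (M.inducedPrice_nonneg wg j0))
    (j := j0) (by simpa using hlt)
  exact map_val_ne_some (μg i) hi

lemma IsLowest.exists_isEquilib_le_price (hlow : IsLowest (M.removeGood j0) pg wg μg) {x : ℝ}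
    (hx0 : 0 ≤ x) (hx : x < inducedPrice M wg j0) :
    ∃ p w μ, IsEquilib M p w μ ∧ x ≤ p j0 := by
  obtain ⟨p, w, μ, h⟩ := M.exists_isReserveEquilib (Pi.single j0 x)
  have hsold : ∃ i, μ i = some j0 := by
    by_contra! hunsold
    have hpx : p j0 = x := by simpa using h.price_unsold j0 hunsold
    obtain ⟨ν, hν⟩ := h.exists_isEquilib_removeGood hunsold
    refine hx.not_ge ?_
    calc inducedPrice M wg j0 ≤ inducedPrice M w j0 := M.inducedPrice_anti (hlow.payoff_le hν)
      _ ≤ x := M.inducedPrice_le_iff.2 ⟨hx0, hpx ▸ fun i => h.u_le_payoff i j0⟩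
  exact ⟨p, w, μ, h.isEquilib_of_sold hx0 hsold, by simpa using h.reserve_le j0⟩

end RemoveGood

/-- Inductive characterization of the highest-equilibrium price: the price of
good `j0` at the highest equilibrium of `M` equals the price induced on `j0`
by the payoffs at the lowest equilibrium of `M` without good `j0`. -/
theorem highest_price_inductive {I J : Type} [Fintype I] [Fintype J] [DecidableEq J]
    (M : Market I J) (j0 : J)
    (p : J → ℝ) (w : I → ℝ) (μ : I → Option J) (hhigh : IsHighest M p w μ)
    (pg : {j : J // j ≠ j0} → ℝ) (wg : I → ℝ) (μg : I → Option {j : J // j ≠ j0})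
    (hlow : IsLowest (M.removeGood j0) pg wg μg) :
    p j0 = inducedPrice M wg j0 := by
  refine le_antisymm (hhigh.1.price_le_inducedPrice hlow.1) ?_
  by_contra! hlt
  obtain ⟨x, hpx, hx⟩ := exists_between hlt
  have hx0 : 0 ≤ x := (hhigh.1.2.1 j0).trans hpx.le
  obtain ⟨p', w', μ', h', hxp'⟩ := hlow.exists_isEquilib_le_price hx0 hx
  exact (hxp'.trans (hhigh.2 p' w' μ' h' j0)).not_gt hpx
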